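/- Let p be prime and let P ∈ F_p[x_1,…,x_n] be a homogeneous polynomial of degree d with d < p. Then there exist m ≤ (n+d−1 choose d−1), coefficients α_1,…,α_m ∈ F_p, and coefficients β_{i,j} ∈ F_p for i ∈ [m], j ∈ [n], such that P(x_1,…,x_n) = Σ_{i=1}^m α_i (Σ_{j=1}^n β_{i,j} x_j)^d for all x_1,…,x_n ∈ F_p. -/

import Mathlib

/-!
Write `D_w` for the derivative along a vector `w`. If `D_w P` is a combination of powers of linear
forms that do not vanish at `w`, it can be integrated term by term; the difference between `P` and
this antiderivative is killed by `D_w`, so it is a form of the same degree on the quotient by `w`.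
This trades degree `d` in `n` variables for degree `d - 1` in `n` variables and degree `d` in
`n - 1` variables, which is Pascal's rule for the bound.

For the integration the forms must avoid the direction `w`, so the induction has to provide forms
avoiding prescribed points. All directions are taken on one affine line `u + F v`: after passing to
the quotient by one of its points, the remaining points of the line become multiples of `v`, so in
the quotient only a single point has to be avoided. Directions are chosen to preserve the condition
that the form is nonzero at some point of the plane spanned by `u` and `v`; in degree two this
makes the polar form nonzero on two of three vectors of the plane summing to zero, and one extra
square then suffices to diagonalise the quadratic form by linear forms avoiding the line.
-/

namespace Waring

open MvPolynomial Module

lemma eq_coeff_zero_smul_pow_zero {σ R : Type*} [CommSemiring R] {P : MvPolynomial σ R}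
    (hP : P.IsHomogeneous 0) (Q : MvPolynomial σ R) : P = coeff 0 P • Q ^ 0 := by
  rw [pow_zero, smul_eq_C_mul, mul_one]
  exact totalDegree_eq_zero_iff_eq_C.mp (Nat.le_zero.mp hP.totalDegree_le)

section DirectionalDerivative

variable {σ R : Type*} [Fintype σ] [CommRing R]

/-- The derivative of a polynomial along a constant vector, as a derivation depending linearly on
the vector. -/
noncomputable def dirDeriv :
    (σ → R) →ₗ[R] Derivation R (MvPolynomial σ R) (MvPolynomial σ R) :=
  Fintype.linearCombination R pderiv

/-- The linear form `∑ i, l i * x i` with coefficient vector `l`. -/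
noncomputable def linearForm : (σ → R) →ₗ[R] MvPolynomial σ R :=
  Fintype.linearCombination R X

lemma dirDeriv_apply (w : σ → R) (P : MvPolynomial σ R) :
    dirDeriv w P = ∑ i, w i • pderiv i P := by
  rw [dirDeriv, Fintype.linearCombination_apply]
  exact (congrFun (map_sum Derivation.coeFnAddMonoidHom (fun i => w i • pderiv i) Finset.univ)
    P).trans (Finset.sum_apply P _ _)

lemma linearForm_apply (l : σ → R) : linearForm l = ∑ i, C (l i) * X i := by
  simp [linearForm, Fintype.linearCombination_apply, smul_eq_C_mul]

lemma isHomogeneous_linearForm (l : σ → R) : (linearForm l).IsHomogeneous 1 := by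
  rw [linearForm_apply]
  exact IsHomogeneous.sum _ _ _ fun i _ => (isHomogeneous_X R i).C_mul (l i)

lemma exists_linearForm_eq {P : MvPolynomial σ R} (hP : P.IsHomogeneous 1) :
    ∃ l, linearForm l = P := by
  rw [← mem_homogeneousSubmodule, homogeneousSubmodule_one_eq_span_X,
    ← Fintype.range_linearCombination] at hP
  exact hP

@[simp]
lemma dirDeriv_linearForm (w l : σ → R) : dirDeriv w (linearForm l) = C (l ⬝ᵥ w) := by
  classical
  simp [dirDeriv_apply, linearForm_apply, dotProduct, pderiv_X, Pi.single_apply,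
    smul_eq_C_mul, mul_comm]

lemma dirDeriv_linearForm_pow (w l : σ → R) (d : ℕ) :
    dirDeriv w (linearForm l ^ d) = (d * (l ⬝ᵥ w)) • linearForm l ^ (d - 1) := by
  simp only [Derivation.leibniz_pow, dirDeriv_linearForm, smul_eq_C_mul, smul_eq_mul, C_mul,
    map_natCast, nsmul_eq_mul]
  ring

lemma dirDeriv_comm (v w : σ → R) (P : MvPolynomial σ R) :
    dirDeriv v (dirDeriv w P) = dirDeriv w (dirDeriv v P) := by
  have bracket_eq_zero : ⁅(dirDeriv v : Derivation R (MvPolynomial σ R) _), dirDeriv w⁆ = 0 := by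
    classical
    refine derivation_ext fun i => ?_
    simp [Derivation.commutator_apply, dirDeriv_apply, pderiv_X, Pi.single_apply]
  have := congrArg (fun D : Derivation R (MvPolynomial σ R) _ => D P) bracket_eq_zero
  exact sub_eq_zero.mp (by simpa [Derivation.commutator_apply] using this)

lemma isHomogeneous_dirDeriv {P : MvPolynomial σ R} {d : ℕ} (hP : P.IsHomogeneous d)
    (w : σ → R) : (dirDeriv w P).IsHomogeneous (d - 1) := by
  rw [dirDeriv_apply]
  refine IsHomogeneous.sum _ _ _ fun i _ => ?_
  rw [smul_eq_C_mul]
  exact hP.pderiv.C_mul (w i)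

lemma eval_dirDeriv_self {P : MvPolynomial σ R} {d : ℕ} (hP : P.IsHomogeneous d) (a : σ → R) :
    eval a (dirDeriv a P) = d * eval a P := by
  simpa [dirDeriv_apply, smul_eval] using congrArg (eval a) hP.sum_X_mul_pderiv

end DirectionalDerivative

section NonVanishing

variable {σ F : Type*} [Field F]

lemma natCast_ne_zero_of_factorial_ne_zero {d k : ℕ} (hd : (d.factorial : F) ≠ 0) (hk : k ≠ 0)
    (hkd : k ≤ d) : (k : F) ≠ 0 :=
  ne_zero_of_dvd_ne_zero hd (Nat.cast_dvd_cast (Nat.dvd_factorial (Nat.pos_of_ne_zero hk) hkd))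

lemma factorial_ne_zero_of_le {d k : ℕ} (hd : (d.factorial : F) ≠ 0) (hkd : k ≤ d) :
    (k.factorial : F) ≠ 0 :=
  ne_zero_of_dvd_ne_zero hd (Nat.cast_dvd_cast (Nat.factorial_dvd_factorial hkd))

lemma natCast_injOn_Iic_of_factorial_ne_zero {d : ℕ} (hd : (d.factorial : F) ≠ 0) :
    Set.InjOn (Nat.cast : ℕ → F) (Set.Iic d) := by
  intro i hi j hj hij
  wlog hle : i ≤ j generalizing i j
  · exact (this hj hi hij.symm (by omega)).symm
  by_contra hne
  refine natCast_ne_zero_of_factorial_ne_zero hd (Nat.sub_ne_zero_of_lt (by omega))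
    ((Nat.sub_le j i).trans hj) ?_
  rw [Nat.cast_sub hle, hij, sub_self]

lemma exists_eval_ne_zero [Finite σ] {d : ℕ} (hd : (d.factorial : F) ≠ 0)
    {P : MvPolynomial σ F} (hP : P.IsHomogeneous d) (hne : P ≠ 0) : ∃ a, eval a P ≠ 0 := by
  classical
  by_contra! hzero
  refine hne (eq_zero_of_eval_zero_at_prod_finset P
    (fun _ => (Finset.range (d + 1)).image (Nat.cast : ℕ → F)) (fun i => ?_) fun a _ => hzero a)
  rw [Finset.card_image_of_injOn fun i hi j hj => natCast_injOn_Iic_of_factorial_ne_zero hd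
    (by simpa [Nat.lt_succ_iff] using hi) (by simpa [Nat.lt_succ_iff] using hj),
    Finset.card_range]
  exact Nat.lt_succ_of_le ((degreeOf_le_totalDegree P i).trans hP.totalDegree_le)

end NonVanishing

section Span

variable {F V : Type*} [Ring F] [AddCommGroup V] [Module F V] {W : Submodule F V} {u v a : V}

lemma mem_sup_span_pair : a ∈ W ⊔ Submodule.span F {u, v} ↔
    ∃ w ∈ W, ∃ α β : F, a = w + (α • u + β • v) := by
  simp only [Submodule.mem_sup, Submodule.mem_span_pair]
  constructor
  · rintro ⟨w, hw, _, ⟨α, β, rfl⟩, rfl⟩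
    exact ⟨w, hw, α, β, rfl⟩
  · rintro ⟨w, hw, α, β, rfl⟩
    exact ⟨w, hw, _, ⟨α, β, rfl⟩, rfl⟩

lemma mem_sup_span_pair_add_smul {s r : F} (hr : IsUnit r)
    (ha : a ∈ W ⊔ Submodule.span F {u, v}) : a ∈ W ⊔ Submodule.span F {u + s • v, r • v} := by
  obtain ⟨w, hw, α, β, rfl⟩ := mem_sup_span_pair.mp ha
  obtain ⟨q, hq⟩ := hr.exists_left_inv
  refine mem_sup_span_pair.mpr ⟨w, hw, α, (β - α * s) * q, ?_⟩
  rw [smul_smul, mul_assoc, hq, mul_one, sub_smul, smul_add, smul_smul]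
  abel

lemma exists_ne_zero_eq_smul_add_smul {x y z : V} (hxyz : x + y + z = 0) {a b c : F}
    (hab : a ≠ b) (hca : c ≠ a) :
    ∃ β γ : F, β ≠ 0 ∧ γ ≠ 0 ∧ a • x + b • y + c • z = β • y + γ • z := by
  refine ⟨b - a, c - a, sub_ne_zero.mpr hab.symm, sub_ne_zero.mpr hca, ?_⟩
  simp only [eq_neg_of_add_eq_zero_right hxyz, smul_neg, smul_add, sub_smul]
  abel

end Span

section FormsMod

variable {σ F : Type*} [Fintype σ] [Field F] {W : Submodule F (σ → F)} {d : ℕ}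

/-- The forms of degree `d` on the quotient `F^σ / W`, encoded as the forms of degree `d` on `F^σ`
whose derivatives along `W` vanish. -/
noncomputable def formsMod (W : Submodule F (σ → F)) (d : ℕ) : Submodule F (MvPolynomial σ F) :=
  homogeneousSubmodule σ F d ⊓ ⨅ w ∈ W, LinearMap.ker (dirDeriv w).toLinearMap

/-- The coefficient vectors of the linear forms vanishing on `W`. -/
def perp (W : Submodule F (σ → F)) : Submodule F (σ → F) :=
  W.orthogonalBilin (dotProductBilin F F)

lemma mem_formsMod {P : MvPolynomial σ F} :
    P ∈ formsMod W d ↔ P.IsHomogeneous d ∧ ∀ w ∈ W, dirDeriv w P = 0 := by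
  simp [formsMod]

lemma mem_perp {l : σ → F} : l ∈ perp W ↔ ∀ w ∈ W, l ⬝ᵥ w = 0 := by
  simp [perp, dotProductBilin, dotProduct_comm l]

lemma mem_perp_sup_span_singleton {w l : σ → F} :
    l ∈ perp (W ⊔ F ∙ w) ↔ l ∈ perp W ∧ l ⬝ᵥ w = 0 := by
  simp only [mem_perp]
  refine ⟨fun h => ⟨fun x hx => h x (Submodule.mem_sup_left hx),
    h w (Submodule.mem_sup_right (Submodule.mem_span_singleton_self w))⟩, fun ⟨hW, hw⟩ x hx => ?_⟩
  obtain ⟨y, hy, z, hz, rfl⟩ := Submodule.mem_sup.mp hx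
  obtain ⟨c, rfl⟩ := Submodule.mem_span_singleton.mp hz
  simp [dotProduct_add, hW y hy, hw]

lemma notMem_of_mem_perp {l x : σ → F} (hl : l ∈ perp W) (hx : l ⬝ᵥ x ≠ 0) : x ∉ W :=
  fun h => hx (mem_perp.mp hl x h)

lemma exists_mem_perp_dotProduct_eq_one {u : σ → F} (hu : u ∉ W) :
    ∃ t ∈ perp W, t ⬝ᵥ u = 1 := by
  classical
  obtain ⟨φ, hφu, hφ⟩ := Submodule.exists_le_ker_of_notMem hu
  obtain ⟨t, rfl⟩ := (dotProductEquiv F σ).surjective φ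
  have htu : t ⬝ᵥ u ≠ 0 := hφu
  refine ⟨(t ⬝ᵥ u)⁻¹ • t, (perp W).smul_mem _ (mem_perp.mpr fun w hw => hφ hw), ?_⟩
  rw [smul_dotProduct, smul_eq_mul, inv_mul_cancel₀ htu]

lemma linearForm_pow_mem_formsMod {l : σ → F} (hl : l ∈ perp W) (d : ℕ) :
    linearForm l ^ d ∈ formsMod W d := by
  refine mem_formsMod.mpr ⟨by simpa using (isHomogeneous_linearForm l).pow d, fun w hw => ?_⟩
  simp [mem_perp.mp hl w hw]

lemma dirDeriv_mem_formsMod {P : MvPolynomial σ F} (hP : P ∈ formsMod W d) (w : σ → F) :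
    dirDeriv w P ∈ formsMod W (d - 1) := by
  obtain ⟨hhom, hker⟩ := mem_formsMod.mp hP
  refine mem_formsMod.mpr ⟨isHomogeneous_dirDeriv hhom w, fun v hv => ?_⟩
  rw [dirDeriv_comm, hker v hv, map_zero]

lemma mem_formsMod_sup_span_singleton {P : MvPolynomial σ F} (hP : P ∈ formsMod W d) {w : σ → F}
    (hw : dirDeriv w P = 0) : P ∈ formsMod (W ⊔ F ∙ w) d := by
  obtain ⟨hhom, hker⟩ := mem_formsMod.mp hP
  refine mem_formsMod.mpr ⟨hhom, fun x hx => ?_⟩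
  obtain ⟨y, hy, z, hz, rfl⟩ := Submodule.mem_sup.mp hx
  obtain ⟨c, rfl⟩ := Submodule.mem_span_singleton.mp hz
  simp [hker y hy, hw]

lemma mem_formsMod_bot {P : MvPolynomial σ F} : P ∈ formsMod ⊥ d ↔ P.IsHomogeneous d := by
  simp [mem_formsMod]

lemma eval_eq_zero_of_mem {P : MvPolynomial σ F} (hd : (d : F) ≠ 0) (hP : P ∈ formsMod W d)
    {a : σ → F} (ha : a ∈ W) : eval a P = 0 := by
  obtain ⟨hhom, hker⟩ := mem_formsMod.mp hP
  have euler := eval_dirDeriv_self hhom a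
  rw [hker a ha, map_zero, eq_comm, mul_eq_zero] at euler
  exact euler.resolve_left hd

end FormsMod

section PowerSums

variable {σ F : Type*} [Fintype σ] [Field F] {W : Submodule F (σ → F)} {A : Set (σ → F)}
  {d m n : ℕ} {P Q : MvPolynomial σ F}

/-- `IsPowerSum A d m P` says that `P` is a linear combination of the `d`-th powers of at most `m`
linear forms with coefficient vectors in `A`. -/
inductive IsPowerSum (A : Set (σ → F)) (d : ℕ) : ℕ → MvPolynomial σ F → Prop
  | zero (m : ℕ) : IsPowerSum A d m 0
  | cons {m : ℕ} {P : MvPolynomial σ F} (c : F) {l : σ → F} (hl : l ∈ A)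
      (hP : IsPowerSum A d m P) : IsPowerSum A d (m + 1) (c • linearForm l ^ d + P)

/-- The linear forms on `F^σ / W` that vanish at no point of `X`. -/
def avoiding (W : Submodule F (σ → F)) (X : Set (σ → F)) : Set (σ → F) :=
  {l | l ∈ perp W ∧ ∀ x ∈ X, l ⬝ᵥ x ≠ 0}

namespace IsPowerSum

lemma single (c : F) {l : σ → F} (hl : l ∈ A) (d : ℕ) :
    IsPowerSum A d 1 (c • linearForm l ^ d) := by
  simpa using cons c hl (zero 0)

lemma mono {B : Set (σ → F)} (h : IsPowerSum A d m P) (hAB : A ⊆ B) (hmn : m ≤ n) :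
    IsPowerSum B d n P := by
  induction h generalizing n with
  | zero m => exact zero n
  | @cons m P c l hl _ ih =>
    obtain ⟨k, rfl⟩ := Nat.exists_eq_add_of_le' hmn
    exact cons c (hAB hl) (ih (n := k + m) (Nat.le_add_left m k))

lemma add (hP : IsPowerSum A d m P) (hQ : IsPowerSum A d n Q) : IsPowerSum A d (n + m) (P + Q) := by
  induction hP with
  | zero m => simpa using hQ.mono subset_rfl (Nat.le_add_right n m)
  | cons c hl _ ih =>
    rw [add_assoc]
    exact cons c hl ih

lemma mem_formsMod (hA : A ⊆ perp W) (h : IsPowerSum A d m P) : P ∈ formsMod W d := by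
  induction h with
  | zero => exact zero_mem _
  | cons c hl _ ih =>
    exact add_mem (Submodule.smul_mem _ c (linearForm_pow_mem_formsMod (hA hl) d)) ih

lemma exists_eq_sum (h : IsPowerSum A d m P) :
    ∃ k ≤ m, ∃ (α : Fin k → F) (β : Fin k → σ → F), P = ∑ i, α i • linearForm (β i) ^ d := by
  induction h with
  | zero m => exact ⟨0, m.zero_le, ![], ![], by simp⟩
  | @cons m P c l _ _ ih =>
    obtain ⟨k, hk, α, β, rfl⟩ := ih
    exact ⟨k + 1, Nat.succ_le_succ hk, Fin.cons c α, Fin.cons l β, by simp [Fin.sum_univ_succ]⟩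

/-- Termwise antiderivative: the power `l ^ d` is the derivative along `w` of
`l ^ (d + 1) / ((d + 1) * l(w))`. -/
lemma exists_dirDeriv_eq {w : σ → F} (hd : ((d + 1 : ℕ) : F) ≠ 0) (hw : ∀ l ∈ A, l ⬝ᵥ w ≠ 0)
    (h : IsPowerSum A d m P) : ∃ Q, IsPowerSum A (d + 1) m Q ∧ dirDeriv w Q = P := by
  induction h with
  | zero m => exact ⟨0, zero m, map_zero _⟩
  | @cons m P c l hl _ ih =>
    obtain ⟨Q, hQ, rfl⟩ := ih
    refine ⟨_, cons (c / ((d + 1 : ℕ) * (l ⬝ᵥ w))) hl hQ, ?_⟩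
    rw [map_add, Derivation.map_smul, dirDeriv_linearForm_pow, smul_smul,
      div_mul_cancel₀ c (mul_ne_zero hd (hw l hl)), Nat.add_sub_cancel]

end IsPowerSum

lemma avoiding_subset_perp (X : Set (σ → F)) : avoiding W X ⊆ perp W := fun _ hl => hl.1

lemma isPowerSum_of_sup_span_singleton_eq_top {u : σ → F} (hd : (d.factorial : F) ≠ 0)
    (hu : u ∉ W) (htop : W ⊔ F ∙ u = ⊤) (hP : P ∈ formsMod W d) :
    IsPowerSum (avoiding W {u}) d 1 P := by
  induction d generalizing P with
  | zero =>
    obtain ⟨t, ht, htu⟩ := exists_mem_perp_dotProduct_eq_one hu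
    rw [eq_coeff_zero_smul_pow_zero (mem_formsMod.mp hP).1 (linearForm t)]
    exact .single _ (show t ∈ avoiding W {u} from ⟨ht, by simp [htu]⟩) 0
  | succ d ih =>
    have hd' := factorial_ne_zero_of_le hd d.le_succ
    have hd1 := natCast_ne_zero_of_factorial_ne_zero hd d.succ_ne_zero le_rfl
    obtain ⟨Q, hQ, hQP⟩ := (ih hd' (dirDeriv_mem_formsMod hP u)).exists_dirDeriv_eq (w := u) hd1
      fun l hl => hl.2 u rfl
    have hQ_mem := hQ.mem_formsMod (avoiding_subset_perp {u})
    have hdiff : P - Q ∈ formsMod ⊤ (d + 1) := htop ▸ mem_formsMod_sup_span_singleton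
      (sub_mem hP hQ_mem) (by rw [map_sub, hQP, sub_self])
    have hPQ : P - Q = 0 := by
      by_contra hne
      obtain ⟨a, ha⟩ := exists_eval_ne_zero hd (mem_formsMod.mp hdiff).1 hne
      exact ha (eval_eq_zero_of_mem hd1 hdiff Submodule.mem_top)
    rwa [sub_eq_zero.mp hPQ]

end PowerSums

section Polar

variable {σ F : Type*} [Fintype σ] [Field F] {W : Submodule F (σ → F)} {Q : MvPolynomial σ F}

/-- The polar form of a quadratic form `Q`, normalised so that `polar Q a a = 2 * Q a`. -/
noncomputable def polar (Q : MvPolynomial σ F) : LinearMap.BilinForm F (σ → F) :=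
  LinearMap.mk₂ F (fun x y => constantCoeff (dirDeriv x (dirDeriv y Q))) (by simp) (by simp)
    (by simp) (by simp)

lemma polar_apply (x y : σ → F) : polar Q x y = constantCoeff (dirDeriv x (dirDeriv y Q)) := rfl

lemma polar_comm (x y : σ → F) : polar Q x y = polar Q y x := by
  rw [polar_apply, dirDeriv_comm, polar_apply]

lemma polar_add_add_eq_zero {x y z : σ → F} (hxyz : x + y + z = 0) (v : σ → F) :
    polar Q v x + polar Q v y + polar Q v z = 0 := by
  rw [← map_add, ← map_add, hxyz, map_zero]

lemma polar_sub_smul_linearForm_sq (c : F) (l x y : σ → F) :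
    polar (Q - c • linearForm l ^ 2) x y = polar Q x y - 2 * c * (l ⬝ᵥ x) * (l ⬝ᵥ y) := by
  simp only [polar_apply, map_sub, Derivation.map_smul, dirDeriv_linearForm_pow, pow_one,
    Nat.cast_ofNat, Nat.add_one_sub_one, dirDeriv_linearForm, constantCoeff_smul,
    constantCoeff_C, smul_eq_mul]
  ring

lemma exists_linearForm_eq_dirDeriv (hQ : Q ∈ formsMod W 2) (a : σ → F) :
    ∃ m ∈ perp W, linearForm m = dirDeriv a Q ∧ ∀ x, m ⬝ᵥ x = polar Q a x := by
  have hDQ := mem_formsMod.mp (dirDeriv_mem_formsMod hQ a)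
  obtain ⟨m, hm⟩ := exists_linearForm_eq hDQ.1
  have hmx (x : σ → F) : m ⬝ᵥ x = polar Q a x := by
    rw [polar_comm, polar_apply, ← hm, dirDeriv_linearForm, constantCoeff_C]
  refine ⟨m, mem_perp.mpr fun w hw => ?_, hm, hmx⟩
  rw [hmx, polar_comm, polar_apply, hDQ.2 w hw, map_zero]

lemma eval_linearForm (a l : σ → F) : eval a (linearForm l) = l ⬝ᵥ a := by
  simp [linearForm_apply, dotProduct]

lemma polar_self (hQ : Q ∈ formsMod W 2) (a : σ → F) : polar Q a a = 2 * eval a Q := by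
  obtain ⟨m, -, hm, hmx⟩ := exists_linearForm_eq_dirDeriv hQ a
  have euler := eval_dirDeriv_self (mem_formsMod.mp hQ).1 a
  rw [← hmx, ← eval_linearForm, hm, euler, Nat.cast_ofNat]

lemma polar_eq_zero_of_mem_right (hQ : Q ∈ formsMod W 2) (x : σ → F) {w : σ → F} (hw : w ∈ W) :
    polar Q x w = 0 := by
  rw [polar_apply, (mem_formsMod.mp hQ).2 w hw, map_zero, map_zero]

lemma notMem_of_polar_self_ne_zero (hQ : Q ∈ formsMod W 2) {a : σ → F} (ha : polar Q a a ≠ 0) :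
    a ∉ W :=
  fun haW => ha (polar_eq_zero_of_mem_right hQ a haW)

lemma exists_sub_sq_mem_formsMod (h2 : (2 : F) ≠ 0) (hQ : Q ∈ formsMod W 2) {a : σ → F}
    (ha : polar Q a a ≠ 0) : ∃ m ∈ perp W, (∀ x, m ⬝ᵥ x = polar Q a x) ∧
      Q - (2 * polar Q a a)⁻¹ • linearForm m ^ 2 ∈ formsMod (W ⊔ F ∙ a) 2 := by
  obtain ⟨m, hmW, hm, hmx⟩ := exists_linearForm_eq_dirDeriv hQ a
  refine ⟨m, hmW, hmx, mem_formsMod_sup_span_singleton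
    (sub_mem hQ (Submodule.smul_mem _ _ (linearForm_pow_mem_formsMod hmW 2))) ?_⟩
  rw [map_sub, Derivation.map_smul, dirDeriv_linearForm_pow, hmx, smul_smul, Nat.cast_ofNat,
    inv_mul_cancel₀ (mul_ne_zero h2 ha), one_smul, pow_one, hm, sub_self]

end Polar

section QuadraticForms

variable {σ F : Type*} [Fintype σ] [Field F] {W : Submodule F (σ → F)} {Q : MvPolynomial σ F}
  {X : Set (σ → F)} {n : ℕ}

lemma exists_eq_succ_of_notMem {u : σ → F} (hu : u ∉ W)
    (hn : Fintype.card σ ≤ finrank F W + n) :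
    ∃ k, n = k + 1 ∧ Fintype.card σ ≤ finrank F ↥(W ⊔ F ∙ u) + k := by
  have hle := Submodule.finrank_le (W ⊔ F ∙ u)
  rw [Submodule.finrank_sup_span_singleton hu] at hle ⊢
  rw [finrank_fintype_fun_eq_card] at hle
  exact ⟨n - 1, by omega, by omega⟩

lemma perp_anti {W' : Submodule F (σ → F)} (h : W ≤ W') : perp W' ≤ perp W :=
  Submodule.orthogonalBilin_le h

lemma isPowerSum_two (h2 : (2 : F) ≠ 0) (hQ : Q ∈ formsMod W 2)
    (hn : Fintype.card σ ≤ finrank F W + n) : IsPowerSum (perp W : Set (σ → F)) 2 n Q := by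
  induction n using Nat.strong_induction_on generalizing W Q with | h n ih
  obtain rfl | hQ0 := eq_or_ne Q 0
  · exact .zero n
  have hfac : ((Nat.factorial 2 : ℕ) : F) ≠ 0 := by simpa using h2
  obtain ⟨a, ha⟩ := exists_eval_ne_zero hfac (mem_formsMod.mp hQ).1 hQ0
  have hpolar : polar Q a a ≠ 0 := by
    rw [polar_self hQ]
    exact mul_ne_zero h2 ha
  obtain ⟨m, hm, -, hR⟩ := exists_sub_sq_mem_formsMod h2 hQ hpolar
  obtain ⟨k, rfl, hk⟩ := exists_eq_succ_of_notMem (notMem_of_polar_self_ne_zero hQ hpolar) hn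
  have hsum := (ih k k.lt_succ_self hR hk).mono (perp_anti le_sup_left) le_rfl
  simpa using IsPowerSum.cons (2 * polar Q a a)⁻¹ hm hsum

/-- Rotating the pair `(x, y)` keeps the binary form `a * x ^ 2 + b * y ^ 2` diagonal. -/
lemma smul_sq_add_smul_sq_eq {A : Type*} [CommRing A] [Algebra F A] (x y : A) {a b s : F}
    (h : b + a * s ^ 2 ≠ 0) :
    a • x ^ 2 + b • y ^ 2 = (a * b / (b + a * s ^ 2)) • (x - s • y) ^ 2 +
      (b + a * s ^ 2)⁻¹ • ((a * s) • x + b • y) ^ 2 := by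
  have h1 : (x - s • y) ^ 2 = x ^ 2 - (2 * s) • (x * y) + s ^ 2 • y ^ 2 := by
    simp only [Algebra.smul_def, map_mul, map_pow, map_ofNat]; ring
  have h2 : ((a * s) • x + b • y) ^ 2 =
      (a * s) ^ 2 • x ^ 2 + (2 * (a * s) * b) • (x * y) + b ^ 2 • y ^ 2 := by
    simp only [Algebra.smul_def, map_mul, map_pow, map_ofNat]; ring
  rw [h1, h2]
  match_scalars <;> field_simp <;> ring

lemma exists_add_mul_sq_ne_zero (h2 : (2 : F) ≠ 0) (h3 : (3 : F) ≠ 0) {a : F} (ha : a ≠ 0)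
    (b : F) : ∃ s ≠ 0, b + a * s ^ 2 ≠ 0 := by
  by_contra! h
  exact mul_ne_zero h3 ha (by linear_combination h 2 h2 - h 1 one_ne_zero)

/-- One square that vanishes nowhere on `X` can be rotated against each of the others. -/
lemma IsPowerSum.cons_avoiding (h2 : (2 : F) ≠ 0) (h3 : (3 : F) ≠ 0) {a : F} (ha : a ≠ 0)
    {t : σ → F} (ht : t ∈ avoiding W X)
    (hQ : IsPowerSum {l | l ∈ perp W ∧ ∀ x ∈ X, l ⬝ᵥ x = 0} 2 n Q) :
    IsPowerSum (avoiding W X) 2 (n + 1) (a • linearForm t ^ 2 + Q) := by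
  induction hQ generalizing a t with
  | zero m => exact .cons a ht (.zero m)
  | @cons m P b y hy _ ih =>
    obtain ⟨s, hs, hne⟩ := exists_add_mul_sq_ne_zero h2 h3 ha b
    have ht₁ : t - s • y ∈ avoiding W X :=
      ⟨sub_mem ht.1 ((perp W).smul_mem s hy.1), fun x hx => by
        simpa [sub_dotProduct, hy.2 x hx] using ht.2 x hx⟩
    have ht₂ : (a * s) • t + b • y ∈ avoiding W X :=
      ⟨add_mem ((perp W).smul_mem _ ht.1) ((perp W).smul_mem b hy.1), fun x hx => by
        simpa [add_dotProduct, hy.2 x hx, ha, hs] using ht.2 x hx⟩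
    have hsum := IsPowerSum.cons (a * b / (b + a * s ^ 2)) ht₁ (ih (inv_ne_zero hne) ht₂)
    rw [map_sub, map_add, map_smul, map_smul, map_smul, ← add_assoc,
      ← smul_sq_add_smul_sq_eq (linearForm t) (linearForm y) hne, add_assoc (a • _)] at hsum
    exact hsum

lemma isPowerSum_two_avoiding_singleton (h2 : (2 : F) ≠ 0) (h3 : (3 : F) ≠ 0) {u : σ → F}
    (hQ : Q ∈ formsMod W 2) (hu : polar Q u u ≠ 0) (hn : Fintype.card σ ≤ finrank F W + n) :
    IsPowerSum (avoiding W {u}) 2 n Q := by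
  obtain ⟨m, hm, hmx, hR⟩ := exists_sub_sq_mem_formsMod h2 hQ hu
  obtain ⟨k, rfl, hk⟩ := exists_eq_succ_of_notMem (notMem_of_polar_self_ne_zero hQ hu) hn
  have hmu : m ∈ avoiding W {u} := ⟨hm, by rintro _ rfl; rwa [hmx]⟩
  have hsum : IsPowerSum {l | l ∈ perp W ∧ ∀ x ∈ ({u} : Set (σ → F)), l ⬝ᵥ x = 0} 2 k
      (Q - (2 * polar Q u u)⁻¹ • linearForm m ^ 2) :=
    (isPowerSum_two h2 hR hk).mono
      (fun l hl => by simpa using mem_perp_sup_span_singleton.mp hl) le_rfl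
  simpa using hsum.cons_avoiding h2 h3 (inv_ne_zero (mul_ne_zero h2 hu)) hmu

lemma isPowerSum_two_avoiding_of_polar_eq_zero (h2 : (2 : F) ≠ 0) (h3 : (3 : F) ≠ 0)
    {x y : σ → F} (hQ : Q ∈ formsMod W 2) (hxy : polar Q x y = 0) (hx : polar Q x x ≠ 0)
    (hy : polar Q y y ≠ 0) (hX : ∀ p ∈ X, ∃ a b : F, a ≠ 0 ∧ b ≠ 0 ∧ p = a • x + b • y)
    (hn : Fintype.card σ ≤ finrank F W + n) : IsPowerSum (avoiding W X) 2 n Q := by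
  obtain ⟨m, hm, hmx, hR⟩ := exists_sub_sq_mem_formsMod h2 hQ hx
  obtain ⟨k, rfl, hk⟩ := exists_eq_succ_of_notMem (notMem_of_polar_self_ne_zero hQ hx) hn
  have hmX : m ∈ avoiding W X := by
    refine ⟨hm, fun p hp => ?_⟩
    obtain ⟨a, b, ha, -, rfl⟩ := hX p hp
    simp [hmx, hxy, ha, hx]
  have hRy : polar (Q - (2 * polar Q x x)⁻¹ • linearForm m ^ 2) y y ≠ 0 := by
    rwa [polar_sub_smul_linearForm_sq, hmx, hxy, mul_zero, sub_zero]
  have hsub : avoiding (W ⊔ F ∙ x) {y} ⊆ avoiding W X := by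
    rintro l ⟨hl, hly⟩
    obtain ⟨hlW, hlx⟩ := mem_perp_sup_span_singleton.mp hl
    refine ⟨hlW, fun p hp => ?_⟩
    obtain ⟨a, b, -, hb, rfl⟩ := hX p hp
    simpa [dotProduct_add, hlx, hb] using hly y rfl
  simpa using IsPowerSum.cons (2 * polar Q x x)⁻¹ hmX
    ((isPowerSum_two_avoiding_singleton h2 h3 hR hRy hk).mono hsub le_rfl)

/-- Changing the coefficient `κ` makes two of the three points orthogonal. -/
lemma exists_isPowerSum_two_sub_smul_sq (h2 : (2 : F) ≠ 0) (h3 : (3 : F) ≠ 0) {x y z η : σ → F}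
    (hQ : Q ∈ formsMod W 2) (hxyz : x + y + z = 0) (hxy : polar Q x y ≠ 0)
    (hη : η ∈ perp W) (hηx : η ⬝ᵥ x = 0) (hηy : η ⬝ᵥ y ≠ 0)
    (hX : ∀ p ∈ X, ∃ a b c : F, a ≠ b ∧ b ≠ c ∧ c ≠ a ∧ p = a • x + b • y + c • z)
    (hn : Fintype.card σ ≤ finrank F W + n) :
    ∃ κ : F, IsPowerSum (avoiding W X) 2 n (Q - κ • linearForm η ^ 2) := by
  have polar_sum := polar_add_add_eq_zero (Q := Q) hxyz
  have hηz : η ⬝ᵥ z = -(η ⬝ᵥ y) := by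
    rw [eq_neg_of_add_eq_zero_right hxyz, dotProduct_neg, dotProduct_add, hηx, zero_add]
  have hQ' (κ : F) : Q - κ • linearForm η ^ 2 ∈ formsMod W 2 :=
    sub_mem hQ (Submodule.smul_mem _ _ (linearForm_pow_mem_formsMod hη 2))
  by_cases hxz : polar Q x z = 0
  · refine ⟨(polar Q z z - 1) / (2 * (η ⬝ᵥ y) ^ 2), isPowerSum_two_avoiding_of_polar_eq_zero h2 h3
      (x := x) (y := z) (hQ' _) ?_ ?_ ?_ (fun p hp => ?_) hn⟩
    · rw [polar_sub_smul_linearForm_sq, hηx, hxz]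
      ring
    · rw [polar_sub_smul_linearForm_sq, hηx]
      exact fun h => hxy (by linear_combination polar_sum x - hxz - h)
    · rw [polar_sub_smul_linearForm_sq, hηz]
      refine ne_of_eq_of_ne ?_ one_ne_zero
      field_simp
      ring
    · obtain ⟨a, b, c, hab, hbc, -, rfl⟩ := hX p hp
      rw [add_comm (a • x)]
      exact exists_ne_zero_eq_smul_add_smul (add_comm x y ▸ hxyz) hab.symm hbc.symm
  · refine ⟨-polar Q y z / (2 * (η ⬝ᵥ y) ^ 2), isPowerSum_two_avoiding_of_polar_eq_zero h2 h3
      (x := y) (y := z) (hQ' _) ?_ ?_ ?_ (fun p hp => ?_) hn⟩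
    · rw [polar_sub_smul_linearForm_sq, hηz]
      field_simp
      ring
    · rw [polar_sub_smul_linearForm_sq]
      refine ne_of_eq_of_ne ?_ (neg_ne_zero.mpr hxy)
      field_simp
      linear_combination polar_sum y - polar_comm (Q := Q) y x
    · rw [polar_sub_smul_linearForm_sq, hηz]
      refine ne_of_eq_of_ne ?_ (neg_ne_zero.mpr hxz)
      field_simp
      linear_combination polar_sum z - polar_comm (Q := Q) z x - polar_comm (Q := Q) z y
    · obtain ⟨a, b, c, hab, -, hca, rfl⟩ := hX p hp
      exact exists_ne_zero_eq_smul_add_smul hxyz hab hca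

lemma isPowerSum_two_avoiding_of_add_add_eq_zero (h2 : (2 : F) ≠ 0) (h3 : (3 : F) ≠ 0)
    {x y z η : σ → F} (hQ : Q ∈ formsMod W 2) (hxyz : x + y + z = 0) (hxy : polar Q x y ≠ 0)
    (hη : η ∈ perp W) (hηx : η ⬝ᵥ x = 0) (hηy : η ⬝ᵥ y ≠ 0)
    (hX : ∀ p ∈ X, ∃ a b c : F, a ≠ b ∧ b ≠ c ∧ c ≠ a ∧ p = a • x + b • y + c • z)
    (hn : Fintype.card σ ≤ finrank F W + n) : IsPowerSum (avoiding W X) 2 (n + 1) Q := by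
  obtain ⟨κ, hκ⟩ := exists_isPowerSum_two_sub_smul_sq h2 h3 hQ hxyz hxy hη hηx hηy hX hn
  have hηX : η ∈ avoiding W X := by
    refine ⟨hη, fun p hp => ?_⟩
    obtain ⟨a, b, c, -, hbc, -, rfl⟩ := hX p hp
    have : η ⬝ᵥ (a • x + b • y + c • z) = (b - c) * (η ⬝ᵥ y) := by
      simp only [eq_neg_of_add_eq_zero_right hxyz, dotProduct_add, dotProduct_neg,
        dotProduct_smul, hηx, smul_eq_mul]
      ring
    rw [this]
    exact mul_ne_zero (sub_ne_zero.mpr hbc) hηy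
  simpa using IsPowerSum.cons κ hηX hκ

lemma polar_self_eq_zero_of_mem_sup_span_pair {u v a : σ → F} (hQ : Q ∈ formsMod W 2)
    (huu : polar Q u u = 0) (huv : polar Q u v = 0) (hvv : polar Q v v = 0)
    (ha : a ∈ W ⊔ Submodule.span F {u, v}) : polar Q a a = 0 := by
  obtain ⟨w, hw, α, β, rfl⟩ := mem_sup_span_pair.mp ha
  have hr (x : σ → F) := polar_eq_zero_of_mem_right hQ x hw
  have hl (x : σ → F) : polar Q w x = 0 := (polar_comm w x).trans (hr x)
  simp [hr, hl, huu, huv, hvv, polar_comm v u]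

lemma exists_polar_ne_zero_of_add_add_eq_zero (hQ : Q ∈ formsMod W 2) {x y z a : σ → F}
    (hxyz : x + y + z = 0) (ha : a ∈ W ⊔ Submodule.span F {x, y}) (haQ : polar Q a a ≠ 0) :
    polar Q x y ≠ 0 ∨ polar Q y z ≠ 0 ∨ polar Q z x ≠ 0 := by
  have polar_sum := polar_add_add_eq_zero (Q := Q) hxyz
  by_contra! h
  obtain ⟨hxy, hyz, hzx⟩ := h
  have hxx : polar Q x x = 0 := by
    linear_combination polar_sum x - hxy - hzx - polar_comm (Q := Q) x z
  have hyy : polar Q y y = 0 := by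
    linear_combination polar_sum y - hxy - hyz - polar_comm (Q := Q) y x
  exact haQ (polar_self_eq_zero_of_mem_sup_span_pair hQ hxx hxy hyy ha)

end QuadraticForms

section AffineLine

variable {F V : Type*} [Field F] [AddCommGroup V] [Module F V] {u v : V} {S : Set F}
  {T : Finset F}

/-- The points of the affine line through `u` with direction `v` whose parameters lie in `S`. -/
def linePoints (u v : V) (S : Set F) : Set V :=
  (fun s => u + s • v) '' S

lemma exists_eq_add_smul_of_mem_linePoints (hST : Disjoint S T) {s t : F} (hs : s ∈ T)
    (ht : t ∈ T) (hst : s ≠ t) {p : V} (hp : p ∈ linePoints u v S) :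
    ∃ c : F, c ≠ 0 ∧ c ≠ 1 ∧ p = (u + s • v) + c • ((t - s) • v) := by
  obtain ⟨r, hr, rfl⟩ := hp
  have hts : t - s ≠ 0 := sub_ne_zero.mpr hst.symm
  have hrs : r ≠ s := hST.ne_of_mem hr hs
  have hrt : r ≠ t := hST.ne_of_mem hr ht
  refine ⟨(r - s) / (t - s), div_ne_zero (sub_ne_zero.mpr hrs) hts, fun h => hrt ?_, ?_⟩
  · exact sub_left_injective ((div_eq_one_iff_eq hts).mp h)
  · rw [smul_smul, div_mul_cancel₀ _ hts]
    module

end AffineLine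

section LineBounds

variable {σ F : Type*} [Fintype σ] [Field F] {W : Submodule F (σ → F)} {u v f g a : σ → F}
  {d n B : ℕ} {S : Set F} {T : Finset F} {P : MvPolynomial σ F}

/-- The linear forms `f` and `g` on `F^σ / W` are dual to the vectors `u` and `v`, witnessing that
`u` and `v` are independent modulo `W`. -/
structure IsDualPair (W : Submodule F (σ → F)) (u v f g : σ → F) : Prop where
  fst_mem : f ∈ perp W
  snd_mem : g ∈ perp W
  fst_left : f ⬝ᵥ u = 1
  fst_right : f ⬝ᵥ v = 0
  snd_left : g ⬝ᵥ u = 0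
  snd_right : g ⬝ᵥ v = 1

variable (σ F) in
/-- Modulo any subspace of codimension at most `n`, every form of degree `d` is a combination of
`B` powers of linear forms that do not vanish at a prescribed nonzero point. -/
def PointBound (d n B : ℕ) : Prop :=
  ∀ ⦃W : Submodule F (σ → F)⦄ ⦃u : σ → F⦄, u ∉ W → Fintype.card σ ≤ finrank F W + n →
    ∀ ⦃P⦄, P ∈ formsMod W d → IsPowerSum (avoiding W {u}) d B P

variable (σ F) in
/-- Modulo any subspace of codimension at most `n`, every form of degree `d` that does not vanish
on the plane spanned by `u` and `v` is a combination of `B` powers of linear forms that vanish at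
none of the points of the line `u + F v` with parameters in `S`, provided that at least `d`
parameters remain outside `S`. -/
def LineBound (d n B : ℕ) : Prop :=
  ∀ ⦃W : Submodule F (σ → F)⦄ ⦃u v f g : σ → F⦄, IsDualPair W u v f g →
    ∀ ⦃S : Set F⦄ ⦃T : Finset F⦄, Disjoint S T → d ≤ T.card →
      Fintype.card σ ≤ finrank F W + n →
      ∀ ⦃P⦄, P ∈ formsMod W d → ∀ a ∈ W ⊔ Submodule.span F {u, v}, eval a P ≠ 0 →
        IsPowerSum (avoiding W (linePoints u v S)) d B P

lemma exists_isDualPair (hu : u ∉ W) (hv : v ∉ W ⊔ F ∙ u) : ∃ f g, IsDualPair W u v f g := by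
  obtain ⟨t, ht, htu⟩ := exists_mem_perp_dotProduct_eq_one hu
  obtain ⟨g, hg, hgv⟩ := exists_mem_perp_dotProduct_eq_one hv
  obtain ⟨hgW, hgu⟩ := mem_perp_sup_span_singleton.mp hg
  refine ⟨t - (t ⬝ᵥ v) • g, g, sub_mem ht ((perp W).smul_mem _ hgW), hgW, ?_, ?_, hgu, hgv⟩
  · simp [sub_dotProduct, htu, hgu]
  · simp [sub_dotProduct, hgv]

lemma lineBound_two (h2 : (2 : F) ≠ 0) (h3 : (3 : F) ≠ 0) (n : ℕ) :
    LineBound σ F 2 n (n + 1) := by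
  rintro W u v f g ⟨hf, hg, hfu, hfv, hgu, hgv⟩ S T hST hT hn Q hQ a ha haQ
  obtain ⟨s, hs, t, ht, hst⟩ := Finset.one_lt_card.mp hT
  have hts : t - s ≠ 0 := sub_ne_zero.mpr hst.symm
  have hcoord (p) (hp : p ∈ linePoints u v S) :=
    exists_eq_add_smul_of_mem_linePoints hST hs ht hst hp
  set x := u + s • v with hx
  set y := (t - s) • v with hy
  set z := -(x + y) with hz
  have hxyz : x + y + z = 0 := add_neg_cancel (x + y)
  have hyzx : y + z + x = 0 := by rw [← hxyz]; abel
  have hzxy : z + x + y = 0 := by rw [← hxyz]; abel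
  have form_mem (r : F) : g - r • f ∈ perp W := sub_mem hg ((perp W).smul_mem r hf)
  have haxy : a ∈ W ⊔ Submodule.span F {x, y} := mem_sup_span_pair_add_smul hts.isUnit ha
  obtain hxy | hyz | hzx := exists_polar_ne_zero_of_add_add_eq_zero hQ hxyz haxy
    (polar_self hQ a ▸ mul_ne_zero h2 haQ)
  · refine isPowerSum_two_avoiding_of_add_add_eq_zero h2 h3 hQ hxyz hxy (form_mem s)
      ?_ ?_ (fun p hp => ?_) hn
    · simp [hx, sub_dotProduct, hfu, hfv, hgu, hgv]
    · simp [hy, sub_dotProduct, hfv, hgv, hts]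
    · obtain ⟨c, hc0, hc1, rfl⟩ := hcoord p hp
      exact ⟨1, c, 0, hc1.symm, hc0, zero_ne_one, by module⟩
  · refine isPowerSum_two_avoiding_of_add_add_eq_zero h2 h3 hQ hyzx hyz hf
      ?_ ?_ (fun p hp => ?_) hn
    · simp [hy, hfv]
    · simp [hx, hy, hz, hfu, hfv]
    · obtain ⟨c, hc0, hc1, rfl⟩ := hcoord p hp
      exact ⟨c, 0, 1, hc0, zero_ne_one, hc1.symm, by module⟩
  · refine isPowerSum_two_avoiding_of_add_add_eq_zero h2 h3 hQ hzxy hzx (form_mem t)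
      ?_ ?_ (fun p hp => ?_) hn
    · simp [hx, hy, hz, sub_dotProduct, hfu, hfv, hgu, hgv]
    · simpa [hx, sub_dotProduct, hfu, hfv, hgu, hgv, neg_add_eq_zero] using hst.symm
    · obtain ⟨c, hc0, hc1, rfl⟩ := hcoord p hp
      exact ⟨0, 1, c, zero_ne_one, hc1.symm, hc0, by module⟩

lemma exists_mem_eval_dirDeriv_ne_zero (hd : (d : F) ≠ 0) (hT : 1 < T.card)
    (hP : P ∈ formsMod W d) (ha : a ∈ W ⊔ Submodule.span F {u, v}) (haP : eval a P ≠ 0) :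
    ∃ s ∈ T, eval a (dirDeriv (u + s • v) P) ≠ 0 := by
  by_contra! hzero
  obtain ⟨s, hs, t, ht, hst⟩ := Finset.one_lt_card.mp hT
  have hsz := hzero s hs
  have htz := hzero t ht
  simp only [map_add, map_smul, Derivation.add_apply, Derivation.smul_apply, smul_eval]
    at hsz htz
  have hv : eval a (dirDeriv v P) = 0 :=
    (mul_eq_zero.mp (show (s - t) * eval a (dirDeriv v P) = 0 by
      linear_combination hsz - htz)).resolve_left (sub_ne_zero.mpr hst)
  have hu : eval a (dirDeriv u P) = 0 := by linear_combination hsz - s * hv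
  have haa : eval a (dirDeriv a P) = 0 := by
    obtain ⟨w, hw, α, β, hwa⟩ := mem_sup_span_pair.mp ha
    conv_lhs => arg 2; rw [hwa]
    simp [smul_eval, (mem_formsMod.mp hP).2 w hw, hu, hv]
  exact mul_ne_zero hd haP ((eval_dirDeriv_self (mem_formsMod.mp hP).1 a).symm.trans haa)

lemma IsDualPair.add_smul_notMem (h : IsDualPair W u v f g) (s : F) : u + s • v ∉ W :=
  notMem_of_mem_perp h.fst_mem (by simp [h.fst_left, h.fst_right])

lemma IsDualPair.right_notMem_sup (h : IsDualPair W u v f g) (s : F) :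
    v ∉ W ⊔ F ∙ (u + s • v) := by
  refine notMem_of_mem_perp (l := g - s • f) (mem_perp_sup_span_singleton.mpr
    ⟨sub_mem h.snd_mem ((perp W).smul_mem s h.fst_mem), ?_⟩) ?_
  · simp [sub_dotProduct, h.fst_left, h.fst_right, h.snd_left, h.snd_right]
  · simp [sub_dotProduct, h.fst_right, h.snd_right]

lemma avoiding_sup_subset_avoiding_linePoints {s : F} (hs : s ∉ S) :
    avoiding (W ⊔ F ∙ (u + s • v)) {v} ⊆ avoiding W (linePoints u v S) := by
  rintro l ⟨hl, hlv⟩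
  obtain ⟨hlW, hlw⟩ := mem_perp_sup_span_singleton.mp hl
  refine ⟨hlW, ?_⟩
  rintro _ ⟨r, hr, rfl⟩
  have : l ⬝ᵥ (u + r • v) = (r - s) * (l ⬝ᵥ v) := by
    simp only [dotProduct_add, dotProduct_smul, smul_eq_mul] at hlw ⊢
    linear_combination hlw
  exact this ▸ mul_ne_zero (sub_ne_zero.mpr fun hrs => hs (hrs ▸ hr)) (hlv v rfl)

lemma LineBound.succ {B₁ B₂ : ℕ} (hd : d ≠ 0) (hdF : ((d + 1 : ℕ) : F) ≠ 0)
    (hline : LineBound σ F d (n + 1) B₁) (hpoint : PointBound σ F (d + 1) n B₂) :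
    LineBound σ F (d + 1) (n + 1) (B₂ + B₁) := by
  classical
  intro W u v f g hfg S T hST hT hn P hP a ha haP
  have one_lt_card : 1 < T.card := by omega
  obtain ⟨s, hs, hsP⟩ := exists_mem_eval_dirDeriv_ne_zero hdF one_lt_card hP ha haP
  have hderiv : IsPowerSum (avoiding W (linePoints u v (insert s S))) d B₁
      (dirDeriv (u + s • v) P) := by
    refine hline hfg (T := T.erase s) ?_ ?_ hn (dirDeriv_mem_formsMod hP _) a ha hsP
    · rw [Set.disjoint_insert_left]
      exact ⟨by simp, hST.mono_right (by simp)⟩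
    · rw [Finset.card_erase_of_mem hs]
      omega
  obtain ⟨Q, hQ, hQP⟩ := hderiv.exists_dirDeriv_eq hdF
    fun l hl => hl.2 _ ⟨s, Set.mem_insert s S, rfl⟩
  have hR : P - Q ∈ formsMod (W ⊔ F ∙ (u + s • v)) (d + 1) := mem_formsMod_sup_span_singleton
    (sub_mem hP (hQ.mem_formsMod (avoiding_subset_perp _))) (by rw [map_sub, hQP, sub_self])
  obtain ⟨k, hk, hcard⟩ := exists_eq_succ_of_notMem (hfg.add_smul_notMem s) hn
  obtain rfl : n = k := Nat.succ_injective hk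
  have hQ' : IsPowerSum (avoiding W (linePoints u v S)) (d + 1) B₁ Q := hQ.mono
    (fun l hl => ⟨hl.1, fun x hx => hl.2 x (Set.image_mono (Set.subset_insert s S) hx)⟩) le_rfl
  have hR' := (hpoint (hfg.right_notMem_sup s) hcard hR).mono
    (avoiding_sup_subset_avoiding_linePoints fun hsS => hST.ne_of_mem hsS hs rfl) le_rfl
  simpa using hQ'.add hR'

lemma LineBound.pointBound (hd : (d.factorial : F) ≠ 0) (hB : 1 ≤ B) (h : LineBound σ F d n B) :
    PointBound σ F d n B := by
  classical
  intro W u hu hn P hP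
  obtain rfl | hP0 := eq_or_ne P 0
  · exact .zero B
  by_cases htop : W ⊔ F ∙ u = ⊤
  · exact (isPowerSum_of_sup_span_singleton_eq_top hd hu htop hP).mono subset_rfl hB
  obtain ⟨a, ha⟩ := exists_eval_ne_zero hd (mem_formsMod.mp hP).1 hP0
  obtain ⟨v, hv, hav⟩ : ∃ v ∉ W ⊔ F ∙ u, a ∈ W ⊔ Submodule.span F {u, v} := by
    by_cases hau : a ∈ W ⊔ F ∙ u
    · obtain ⟨v, hv⟩ := SetLike.exists_not_mem_of_ne_top _ htop rfl
      exact ⟨v, hv, sup_le_sup_left (Submodule.span_mono (by simp)) W hau⟩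
    · exact ⟨a, hau, Submodule.mem_sup_right (Submodule.subset_span (by simp))⟩
  obtain ⟨f, g, hfg⟩ := exists_isDualPair hu hv
  have hinj := natCast_injOn_Iic_of_factorial_ne_zero hd
  have hsum := h hfg (S := {0}) (T := (Finset.Icc 1 d).image Nat.cast) ?_ ?_ hn hP a hav ha
  · simpa [linePoints] using hsum
  · rw [Set.disjoint_singleton_left]
    simp only [Finset.coe_image, Finset.coe_Icc, Set.mem_image, Set.mem_Icc, not_exists]
    rintro k ⟨hk, hk0⟩
    exact natCast_ne_zero_of_factorial_ne_zero hd (by omega) hk.2 hk0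
  · rw [Finset.card_image_of_injOn (hinj.mono fun i hi => by simp_all), Nat.card_Icc]
    omega

lemma lineBound (h3 : (3 : F) ≠ 0) {e : ℕ} (hd : ((e + 2).factorial : F) ≠ 0) (n : ℕ) :
    LineBound σ F (e + 2) n ((n + e + 1).choose (e + 1)) := by
  induction e generalizing n with
  | zero =>
    have h2 : (2 : F) ≠ 0 := mod_cast natCast_ne_zero_of_factorial_ne_zero hd two_ne_zero le_rfl
    simpa using lineBound_two h2 h3 n
  | succ e ihe =>
    induction n with
    | zero =>
      intro W u v f g hfg S T _ _ hn
      obtain ⟨k, hk, -⟩ := exists_eq_succ_of_notMem (hfg.add_smul_notMem 0) hn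
      exact absurd hk.symm k.succ_ne_zero
    | succ n ihn =>
      have hpoint := ihn.pointBound hd (Nat.choose_pos (by omega))
      have hline := ihe (factorial_ne_zero_of_le hd (e + 2).le_succ) (n + 1)
      have pascal : (n + 1 + (e + 1) + 1).choose (e + 1 + 1) =
          (n + (e + 1) + 1).choose (e + 1 + 1) + (n + 1 + e + 1).choose (e + 1) := by
        rw [Nat.choose_succ_succ', add_comm, show n + (e + 1) + 1 = n + 1 + (e + 1) by ring,
          ← add_assoc (n + 1) e 1]
      rw [pascal]
      exact hline.succ (by omega)
        (natCast_ne_zero_of_factorial_ne_zero hd (e + 2).succ_ne_zero le_rfl) hpoint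

end LineBounds

theorem exists_isPowerSum {σ F : Type*} [Fintype σ] [Field F] {d : ℕ}
    (hd : (d.factorial : F) ≠ 0) {P : MvPolynomial σ F} (hP : P.IsHomogeneous d) :
    IsPowerSum Set.univ d ((Fintype.card σ + d - 1).choose (d - 1)) P := by
  have hP' : P ∈ formsMod ⊥ d := mem_formsMod_bot.mpr hP
  match d with
  | 0 =>
    rw [eq_coeff_zero_smul_pow_zero hP (linearForm 0)]
    simpa using IsPowerSum.single (coeff 0 P) (Set.mem_univ (0 : σ → F)) 0
  | 1 =>
    obtain ⟨l, rfl⟩ := exists_linearForm_eq hP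
    simpa using IsPowerSum.single (1 : F) (Set.mem_univ l) 1
  | 2 =>
    have h2 : (2 : F) ≠ 0 := mod_cast natCast_ne_zero_of_factorial_ne_zero hd two_ne_zero le_rfl
    exact (isPowerSum_two h2 hP'
      (Nat.le_add_left _ _)).mono (Set.subset_univ _) (by simp)
  | e + 3 =>
    obtain rfl | hP0 := eq_or_ne P 0
    · exact .zero _
    obtain ⟨a, ha⟩ := exists_eval_ne_zero hd hP hP0
    have ha0 : a ∉ (⊥ : Submodule F (σ → F)) := fun h => ha (eval_eq_zero_of_mem
      (natCast_ne_zero_of_factorial_ne_zero hd (e + 2).succ_ne_zero le_rfl) hP' h)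
    have h3 : (3 : F) ≠ 0 :=
      mod_cast natCast_ne_zero_of_factorial_ne_zero hd three_ne_zero (Nat.le_add_left 3 e)
    have hpoint := (lineBound (σ := σ) h3 hd (Fintype.card σ)).pointBound hd
      (Nat.choose_pos (by omega))
    exact (hpoint ha0 (Nat.le_add_left _ _) hP').mono (Set.subset_univ _) le_rfl

end Waring

open MvPolynomial in
theorem stmt_1_general {σ F : Type*} [Fintype σ] [Field F] {d : ℕ} (hd : (d.factorial : F) ≠ 0)
    {P : MvPolynomial σ F} (hP : P.IsHomogeneous d) :
    ∃ m ≤ (Fintype.card σ + d - 1).choose (d - 1), ∃ (α : Fin m → F) (β : Fin m → σ → F),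
      P = ∑ i, C (α i) * (∑ j, C (β i j) * X j) ^ d := by
  obtain ⟨m, hm, α, β, hsum⟩ := (Waring.exists_isPowerSum hd hP).exists_eq_sum
  exact ⟨m, hm, α, β, by simpa only [smul_eq_C_mul, Waring.linearForm_apply] using hsum⟩

theorem stmt_1 (p n d : ℕ) (hp : p.Prime) (hdp : d < p)
    (P : MvPolynomial (Fin n) (ZMod p)) (hP : P.IsHomogeneous d) :
    ∃ m : ℕ, m ≤ Nat.choose (n + d - 1) (d - 1) ∧
      ∃ (α : Fin m → ZMod p) (β : Fin m → Fin n → ZMod p),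
        ∀ x : Fin n → ZMod p,
          MvPolynomial.eval x P = ∑ i, α i * (∑ j, β i j * x j) ^ d := by
  have : Fact p.Prime := ⟨hp⟩
  obtain ⟨m, hm, α, β, hsum⟩ := stmt_1_general
    ((IsUnit.natCast_factorial_iff_of_charP p).mpr hdp).ne_zero hP
  exact ⟨m, by simpa using hm, α, β, fun x => by simp [hsum]⟩
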